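/- Positive-solution transfer to the transposed system: Let D be an n×n real diagonal matrix with strictly positive diagonal entries and let A be an n×n real matrix with nonnegative entries. Suppose there exists a vector p ∈ ℝⁿ with all entries strictly positive such that the vector (I − D·A) p has all entries strictly positive. Then for every vector c ∈ ℝⁿ with all entries strictly positive, the matrix I − D·Aᵀ is invertible and the vector p' = (I − D·Aᵀ)⁻¹ c has all entries strictly positive. -/

import Mathlib

open Matrix

/-- **Positive-solution transfer to the transposed system.** Let `D` be a real diagonal
matrix with strictly positive diagonal entries and `A` a nonnegative real matrix.
If some entrywise-positive vector `p` satisfies that `(I − D·A) p` is entrywise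
positive, then for every entrywise-positive vector `c`, the matrix `I − D·Aᵀ` is
invertible and `(I − D·Aᵀ)⁻¹ c` is entrywise positive. -/
theorem positive_solution_transfer (n : ℕ) (D A : Matrix (Fin n) (Fin n) ℝ)
    (hD : D.IsDiag) (hDpos : ∀ i, 0 < D i i) (hA : ∀ i j, 0 ≤ A i j)
    (p : Fin n → ℝ) (hp : ∀ i, 0 < p i) (hIp : ∀ i, 0 < ((1 - D * A) *ᵥ p) i) :
    ∀ c : Fin n → ℝ, (∀ i, 0 < c i) →
      IsUnit (1 - D * Aᵀ) ∧ ∀ i, 0 < ((1 - D * Aᵀ)⁻¹ *ᵥ c) i := by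
  have hDA : ∀ (B : Matrix (Fin n) (Fin n) ℝ) (v : Fin n → ℝ) (i : Fin n),
      ((1 - D * B) *ᵥ v) i = v i - D i i * ∑ j, B i j * v j := by
    intro B v i
    have h : D = Matrix.diagonal (fun i => D i i) := (hD.diagonal_diag).symm
    rw [Matrix.sub_mulVec, Matrix.one_mulVec, ← Matrix.mulVec_mulVec]
    rw [Pi.sub_apply]
    congr 1
    conv_lhs => rw [h]
    rw [Matrix.mulVec_diagonal]
    rfl
  have key : ∀ y : Fin n → ℝ, (∀ i, 0 ≤ ((1 - D * Aᵀ) *ᵥ y) i) → ∀ i, 0 ≤ y i := by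
    intro y hy
    set z : Fin n → ℝ := fun i => max (-y i) 0 with hz
    have hz0 : ∀ i, 0 ≤ z i := fun i => le_max_right _ _
    have hzy : ∀ i, -y i ≤ z i := fun i => le_max_left _ _
    have h1 : ∀ i, z i ≤ D i i * ∑ j, A j i * z j := by
      intro i
      apply max_le
      · have h := hy i
        rw [hDA] at h
        have h2 : -(∑ j, Aᵀ i j * y j) ≤ ∑ j, A j i * z j := by
          rw [← Finset.sum_neg_distrib]
          apply Finset.sum_le_sum
          intro j _
          have := mul_le_mul_of_nonneg_left (hzy j) (hA j i)
          simp only [Matrix.transpose_apply]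
          linarith
        have := mul_le_mul_of_nonneg_left h2 (hDpos i).le
        linarith
      · exact mul_nonneg (hDpos i).le (Finset.sum_nonneg fun j _ => mul_nonneg (hA j i) (hz0 j))
    have hq : ∀ i, 0 < p i / D i i - ∑ j, A i j * p j := by
      intro i
      have h := hIp i
      rw [hDA] at h
      rw [sub_pos, lt_div_iff₀ (hDpos i)]
      linarith
    have h2 : ∑ i, z i * (p i / D i i) ≤ ∑ i, z i * ∑ j, A i j * p j := by
      calc ∑ i, z i * (p i / D i i) ≤ ∑ i, ∑ j, p i * (A j i * z j) := by
            apply Finset.sum_le_sum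
            intro i _
            rw [← Finset.mul_sum, mul_div_assoc', div_le_iff₀ (hDpos i)]
            have := mul_le_mul_of_nonneg_left (h1 i) (hp i).le
            linarith
        _ = ∑ i, z i * ∑ j, A i j * p j := by
            rw [Finset.sum_comm]
            refine Finset.sum_congr rfl fun i _ => ?_
            rw [Finset.mul_sum]
            exact Finset.sum_congr rfl fun j _ => by ring
    have h3 : ∑ i, z i * (p i / D i i - ∑ j, A i j * p j) = 0 := by
      apply le_antisymm
      · simp only [mul_sub, Finset.sum_sub_distrib]
        linarith
      · exact Finset.sum_nonneg fun i _ => mul_nonneg (hz0 i) (hq i).le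
    rw [Finset.sum_eq_zero_iff_of_nonneg
      (fun i _ => mul_nonneg (hz0 i) (hq i).le)] at h3
    intro i
    have h4 := (mul_eq_zero.mp (h3 i (Finset.mem_univ i))).resolve_right (hq i).ne'
    have := hzy i
    linarith
  have hunit : IsUnit (1 - D * Aᵀ) := by
    rw [← Matrix.mulVec_injective_iff_isUnit]
    intro u v huv
    have huv' : (1 - D * Aᵀ) *ᵥ u = (1 - D * Aᵀ) *ᵥ v := huv
    have a := key (u - v) (fun i => by rw [Matrix.mulVec_sub, huv']; simp)
    have b := key (v - u) (fun i => by rw [Matrix.mulVec_sub, huv']; simp)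
    ext i
    have := a i
    have := b i
    simp only [Pi.sub_apply] at *
    linarith
  intro c hc
  refine ⟨hunit, ?_⟩
  have hx : (1 - D * Aᵀ) *ᵥ ((1 - D * Aᵀ)⁻¹ *ᵥ c) = c := by
    rw [Matrix.mulVec_mulVec, Matrix.mul_nonsing_inv _ ((Matrix.isUnit_iff_isUnit_det _).mp hunit),
      Matrix.one_mulVec]
  generalize (1 - D * Aᵀ)⁻¹ *ᵥ c = x at hx
  have hx0 := key x (fun i => by rw [hx]; exact (hc i).le)
  intro i
  have h := hDA Aᵀ x i
  rw [hx] at h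
  have : 0 ≤ D i i * ∑ j, Aᵀ i j * x j :=
    mul_nonneg (hDpos i).le (Finset.sum_nonneg fun j _ => mul_nonneg (hA j i) (hx0 j))
  have := hc i
  linarith
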